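/- arXiv:2004.10521 — 2 statements merged into one kernel-verified Lean document; each statement's English description precedes it below -/
import Mathlib

section
/- Let U and V be two distinct vertices of H^1 and let W be a set with L ⊆ W ⊆ V(H^1)\{U,V}. Then U ⊥_{H^0} V | W if and only if U ⊥_{H^1} V | W (i.e., every path between U and V in H^0 intersects W if and only if every path between U and V in H^1 intersects W). -/
open Relation Set

namespace CausalGraph

variable {V : Type*} [Fintype V] [DecidableEq V]

/-- `p` is a path in the undirected sense from `u` to `v` along adjacency `Adj`:
a nonempty list of pairwise distinct vertices, consecutive ones adjacent,
starting at `u` and ending at `v`. -/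
def IsPath (Adj : V → V → Prop) (u v : V) (p : List V) : Prop :=
  List.Chain' Adj p ∧ p.head? = some u ∧ p.getLast? = some v ∧ p.Nodup

/-- Ancestors of `S` in the digraph `D` (every vertex is an ancestor of itself). -/
def anc (D : V → V → Prop) (S : Set V) : Set V :=
  {u | ∃ v ∈ S, Relation.ReflTransGen D u v}

/-- Descendants of `S` in the digraph `D` (every vertex is a descendant of itself). -/
def desc (D : V → V → Prop) (S : Set V) : Set V :=
  {u | ∃ v ∈ S, Relation.ReflTransGen D v u}

/-- Parents of vertices of `S` in the digraph `D`. -/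
def parents (D : V → V → Prop) (S : Set V) : Set V :=
  {u | ∃ v ∈ S, D u v}

/-- The digraph `D` is acyclic. -/
def Acyclic (D : V → V → Prop) : Prop :=
  ∀ u v, D u v → ¬ Relation.ReflTransGen D v u

/-- Vertices other than `A` lying on a directed path from `A` to `Y`. -/
def cn (D : V → V → Prop) (A Y : V) : Set V :=
  {v | v ≠ A ∧ Relation.ReflTransGen D A v ∧ Relation.ReflTransGen D v Y}

/-- The forbidden set. -/
def forb (D : V → V → Prop) (A Y : V) : Set V :=
  desc D (cn D A Y) ∪ {A}

/-- Proper back-door graph: delete every edge from `A` into `cn D A Y`. -/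
def pbd (D : V → V → Prop) (A Y : V) : V → V → Prop :=
  fun u v => D u v ∧ ¬(u = A ∧ v ∈ cn D A Y)

/-- `y` is an interior vertex of the list `p` with neighbours `x` and `z` on the path. -/
def InteriorAt (p : List V) (x y z : V) : Prop :=
  ∃ s t : List V, p = s ++ x :: y :: z :: t

/-- The path `p` is blocked by `Z` in the digraph `D`: some interior non-collider
lies in `Z`, or some interior collider has no descendant in `Z`. -/
def Blocked (D : V → V → Prop) (Z : Set V) (p : List V) : Prop :=
  (∃ x y z, InteriorAt p x y z ∧ ¬(D x y ∧ D z y) ∧ y ∈ Z) ∨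
  (∃ x y z, InteriorAt p x y z ∧ (D x y ∧ D z y) ∧ ∀ d ∈ desc D {y}, d ∉ Z)

/-- d-separation of `S` and `T` given `Z` in the digraph `D`. -/
def DSep (D : V → V → Prop) (S T Z : Set V) : Prop :=
  ∀ s ∈ S, ∀ t ∈ T, ∀ p : List V,
    IsPath (fun a b => D a b ∨ D b a) s t p → Blocked D Z p

/-- Moral graph of the subgraph of the digraph `D` induced on `Vs`. -/
def moral (D : V → V → Prop) (Vs : Set V) : SimpleGraph V :=
  SimpleGraph.fromRel (fun u v =>
    u ∈ Vs ∧ v ∈ Vs ∧ (D u v ∨ D v u ∨ ∃ w ∈ Vs, D u w ∧ D v w))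

/-- Separation in an undirected graph: every path from `S` to `T` meets `W`. -/
def USep (H : SimpleGraph V) (S T W : Set V) : Prop :=
  ∀ s ∈ S, ∀ t ∈ T, ∀ p : List V, IsPath H.Adj s t p → ∃ z ∈ W, z ∈ p

/-- `Z` is an `A`–`Y` cut in an undirected graph `H` with vertex set `Vs`. -/
def IsCut (Vs : Set V) (H : SimpleGraph V) (A Y : V) (Z : Set V) : Prop :=
  Z ⊆ Vs ∧ Z ∩ {A, Y} = ∅ ∧ ∀ p : List V, IsPath H.Adj A Y p → ∃ z ∈ Z, z ∈ p

def MinimalCut (Vs : Set V) (H : SimpleGraph V) (A Y : V) (Z : Set V) : Prop :=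
  IsCut Vs H A Y Z ∧ ∀ Z' ⊂ Z, ¬ IsCut Vs H A Y Z'

def MinimumCut (Vs : Set V) (H : SimpleGraph V) (A Y : V) (Z : Set V) : Prop :=
  IsCut Vs H A Y Z ∧ ∀ Z', IsCut Vs H A Y Z' → Z.ncard ≤ Z'.ncard

/-- Connected component of `y` in `H` restricted to the complement of `U`:
vertices reachable from `y` by paths avoiding `U`. -/
def cc (H : SimpleGraph V) (U : Set V) (y : V) : Set V :=
  {w | ∃ p : List V, IsPath H.Adj y w p ∧ ∀ x ∈ p, x ∉ U}

/-- Boundary of `S` in `H`: vertices outside `S` adjacent to some vertex of `S`. -/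
def bdry (H : SimpleGraph V) (S : Set V) : Set V :=
  {v | v ∉ S ∧ ∃ u ∈ S, H.Adj v u}

/-- The partial order `Z₁ ⊴_H Z₂` between `A`–`Y` cuts. -/
def TLE (H : SimpleGraph V) (A Y : V) (Z₁ Z₂ : Set V) : Prop :=
  USep H {Y} (Z₂ \ Z₁) Z₁ ∧ USep H {A} (Z₁ \ Z₂) Z₂

/-- Ancestors of `{A, Y} ∪ L`. -/
def ancAYL (D : V → V → Prop) (A Y : V) (L : Set V) : Set V :=
  anc D ({A, Y} ∪ L)

/-- The moral graph `H⁰` of the proper back-door graph induced on `an_G({A,Y} ∪ L)`. -/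
def H0 (D : V → V → Prop) (A Y : V) (L : Set V) : SimpleGraph V :=
  moral (pbd D A Y) (ancAYL D A Y L)

/-- The set of vertices removed from `H⁰` when constructing `H¹`. -/
def Ignore (D : V → V → Prop) (A Y : V) (L N : Set V) : Set V :=
  (ancAYL D A Y L \ {A, Y}) ∩ ((Set.univ \ N) ∪ forb D A Y)

/-- Vertex set of `H¹`. -/
def H1verts (D : V → V → Prop) (A Y : V) (L N : Set V) : Set V :=
  ancAYL D A Y L \ Ignore D A Y L N

/-- The non-parametric adjustment efficiency graph `H¹`: delete the vertices of
`Ignore`, join two remaining vertices if they are joined in `H⁰` by a path all of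
whose intermediate vertices are in `Ignore`, and join `A` and `Y` to every vertex
of `L`. -/
def H1 (D : V → V → Prop) (A Y : V) (L N : Set V) : SimpleGraph V :=
  SimpleGraph.fromRel (fun u v =>
    u ∈ H1verts D A Y L N ∧ v ∈ H1verts D A Y L N ∧
      ((∃ p : List V, IsPath (H0 D A Y L).Adj u v p ∧
          ∀ x ∈ p, x ≠ u → x ≠ v → x ∈ Ignore D A Y L N) ∨
        (u = A ∧ v ∈ L) ∨ (u = Y ∧ v ∈ L)))

/-- The graphical adjustment criterion for `A, Y, L, N` in the DAG `D`. -/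
def GAC (D : V → V → Prop) (A Y : V) (L N Z : Set V) : Prop :=
  DSep (pbd D A Y) {A} {Y} Z ∧ Z ∩ forb D A Y = ∅ ∧ L ⊆ Z ∧ Z ⊆ N

def MinimalGAC (D : V → V → Prop) (A Y : V) (L N Z : Set V) : Prop :=
  GAC D A Y L N Z ∧ ∀ Z' ⊂ Z, ¬ GAC D A Y L N Z'

def MinimumGAC (D : V → V → Prop) (A Y : V) (L N Z : Set V) : Prop :=
  GAC D A Y L N Z ∧ ∀ Z', GAC D A Y L N Z' → Z.ncard ≤ Z'.ncard

/-- Graphical admissibility of the pair `(L, N)`. -/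
def Admissible (D : V → V → Prop) (A Y : V) (L N : Set V) : Prop :=
  ∃ Z, GAC D A Y L N Z

end CausalGraph

/-!
Up to edges with an endpoint in `L`, `H¹` is the torso of `H⁰` on `V(H¹)`: an excursion of an
`H⁰`-walk into ignored vertices becomes a single edge. Replacing excursions by edges does not
enlarge the set of vertices visited, and replacing edges by excursions adds no vertex of `V(H¹)`.
As `W ⊆ V(H¹)`, a walk avoiding `W` in one graph thus yields one in the other. The remaining edges
of `H¹` are incident to `L ⊆ W`, so no walk avoiding `W` uses them.
-/

namespace CausalGraph

section Separation

variable {V : Type*} {H H' : SimpleGraph V} {S T W : Set V}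

theorem isPath_iff_exists_walk {a b : V} {p : List V} :
    IsPath H.Adj a b p ↔ ∃ w : H.Walk a b, w.IsPath ∧ w.support = p := by
  constructor
  · rintro ⟨hchain, hhead, hlast, hnodup⟩
    have hne : p ≠ [] := by
      rintro rfl
      simp at hhead
    obtain rfl : p.head hne = a := by simpa [List.head?_eq_some_head hne] using hhead
    obtain rfl : p.getLast hne = b := by simpa [List.getLast?_eq_some_getLast hne] using hlast
    have hsupp := SimpleGraph.Walk.support_ofSupport hne hchain
    exact ⟨.ofSupport p hne hchain, .mk' (hsupp.symm ▸ hnodup), hsupp⟩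
  · rintro ⟨w, hw, rfl⟩
    refine ⟨w.isChain_adj_support, ?_, ?_, hw.support_nodup⟩
    · rw [List.head?_eq_some_head w.support_ne_nil, w.head_support]
    · rw [List.getLast?_eq_some_getLast w.support_ne_nil, w.getLast_support]

theorem exists_isPath_forall_mem_iff {a b : V} {P : V → Prop} :
    (∃ p, IsPath H.Adj a b p ∧ ∀ x ∈ p, P x) ↔ ∃ w : H.Walk a b, ∀ x ∈ w.support, P x := by
  classical
  constructor
  · rintro ⟨p, hp, hP⟩
    obtain ⟨w, -, rfl⟩ := isPath_iff_exists_walk.1 hp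
    exact ⟨w, hP⟩
  · rintro ⟨w, hP⟩
    exact ⟨w.bypass.support, isPath_iff_exists_walk.2 ⟨w.bypass, w.bypass_isPath, rfl⟩,
      fun x hx => hP x (w.support_bypass_subset_support hx)⟩

theorem usep_iff_forall_walk :
    USep H S T W ↔ ∀ s ∈ S, ∀ t ∈ T, ∀ w : H.Walk s t, ∃ z ∈ W, z ∈ w.support := by
  refine forall₄_congr fun s _ t _ => not_iff_not.1 ?_
  push Not
  simpa only [imp_not_comm] using exists_isPath_forall_mem_iff (P := (· ∉ W))

theorem USep.of_adj_imp (h : USep H S T W)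
    (hadj : ∀ a b, a ∉ W → b ∉ W → H'.Adj a b → H.Adj a b) : USep H' S T W := by
  rw [usep_iff_forall_walk] at h ⊢
  intro s hs t ht w
  by_contra! hw
  have hedges : ∀ e ∈ w.edges, e ∈ H.edgeSet := by
    rintro ⟨a, b⟩ he
    exact hadj a b (fun ha => hw a ha (w.fst_mem_support_of_mem_edges he))
      (fun hb => hw b hb (w.snd_mem_support_of_mem_edges he)) (w.adj_of_mem_edges he)
  obtain ⟨z, hzW, hz⟩ := h s hs t ht (w.transfer H hedges)
  exact hw z hzW (by rwa [w.support_transfer] at hz)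

theorem usep_congr_adj (hadj : ∀ a b, a ∉ W → b ∉ W → (H.Adj a b ↔ H'.Adj a b)) :
    USep H S T W ↔ USep H' S T W :=
  ⟨fun h => h.of_adj_imp fun a b ha hb => (hadj a b ha hb).2,
    fun h => h.of_adj_imp fun a b ha hb => (hadj a b ha hb).1⟩

end Separation

section Torso

variable {V : Type*} {H : SimpleGraph V} {K S T W : Set V}

/-- The torso of `H` on `K`: two vertices of `K` are adjacent when a walk of `H` joins them with
all intermediate vertices outside `K`. Vertices outside `K` are kept as isolated vertices, so that
the torso lives on the same type as `H`. -/
def torso (H : SimpleGraph V) (K : Set V) : SimpleGraph V where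
  Adj a b := a ≠ b ∧ a ∈ K ∧ b ∈ K ∧ ∃ w : H.Walk a b, ∀ x ∈ w.support, x ∈ K → x = a ∨ x = b
  symm := ⟨fun _ _ ⟨hab, ha, hb, w, hw⟩ =>
    ⟨hab.symm, hb, ha, w.reverse, fun x hx hxK => (hw x (by simpa using hx) hxK).symm⟩⟩
  loopless := ⟨fun _ h => h.1 rfl⟩

theorem torso_adj {a b : V} : (torso H K).Adj a b ↔
    a ≠ b ∧ a ∈ K ∧ b ∈ K ∧ ∃ w : H.Walk a b, ∀ x ∈ w.support, x ∈ K → x = a ∨ x = b :=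
  Iff.rfl

theorem exists_walk_of_walk_torso {a b : V} (q : (torso H K).Walk a b) :
    ∃ p : H.Walk a b, ∀ x ∈ p.support, x ∈ K → x ∈ q.support := by
  induction q with
  | nil => exact ⟨.nil, fun _ hx _ => hx⟩
  | cons hadj q ih =>
    obtain ⟨-, -, -, w, hw⟩ := torso_adj.1 hadj
    obtain ⟨p, hp⟩ := ih
    refine ⟨w.append p, fun x hx hxK => ?_⟩
    rw [SimpleGraph.Walk.support_cons, List.mem_cons]
    rcases (w.mem_support_append_iff p).1 hx with hx | hx
    · rcases hw x hx hxK with rfl | rfl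
      · exact .inl rfl
      · exact .inr q.start_mem_support
    · exact .inr (hp x hx hxK)

-- The walk `r` up to the first visit to `K` lets the induction pass through vertices outside `K`.
theorem exists_walk_to_first_mem_and_walk_torso {a b : V} (p : H.Walk a b) (hb : b ∈ K) :
    ∃ c ∈ K, (∃ r : H.Walk a c, ∀ x ∈ r.support, x ∈ K → x = c) ∧
      ∃ q : (torso H K).Walk c b, q.support ⊆ p.support := by
  induction p with
  | @nil b => exact ⟨b, hb, ⟨.nil, by simp⟩, .nil, by simp⟩
  | @cons a d b hadj p ih =>
    obtain ⟨c, hc, ⟨r, hr⟩, q, hq⟩ := ih hb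
    have hq' : q.support ⊆ (p.cons hadj).support := List.subset_cons_of_subset a hq
    have hr' : ∀ x ∈ (r.cons hadj).support, x ∈ K → x = a ∨ x = c := by
      rintro x hx hxK
      rw [SimpleGraph.Walk.support_cons, List.mem_cons] at hx
      exact hx.imp_right (hr x · hxK)
    by_cases ha : a ∈ K
    · refine ⟨a, ha, ⟨.nil, by simp⟩, ?_⟩
      rcases eq_or_ne a c with rfl | hac
      · exact ⟨q, hq'⟩
      · exact ⟨q.cons (torso_adj.2 ⟨hac, ha, hc, r.cons hadj, hr'⟩), List.cons_subset_cons a hq⟩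
    · refine ⟨c, hc, ⟨r.cons hadj, fun x hx hxK => ?_⟩, q, hq'⟩
      exact (hr' x hx hxK).resolve_left fun h => ha (h ▸ hxK)

theorem exists_walk_torso_of_walk {a b : V} (p : H.Walk a b) (ha : a ∈ K) (hb : b ∈ K) :
    ∃ q : (torso H K).Walk a b, q.support ⊆ p.support := by
  obtain ⟨c, -, ⟨r, hr⟩, q, hq⟩ := exists_walk_to_first_mem_and_walk_torso p hb
  obtain rfl : a = c := hr a r.start_mem_support ha
  exact ⟨q, hq⟩

theorem usep_torso_iff (hS : S ⊆ K) (hT : T ⊆ K) (hW : W ⊆ K) :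
    USep (torso H K) S T W ↔ USep H S T W := by
  simp only [usep_iff_forall_walk]
  refine forall₄_congr fun s hs t ht => ⟨fun h p => ?_, fun h q => ?_⟩
  · obtain ⟨q, hq⟩ := exists_walk_torso_of_walk p (hS hs) (hT ht)
    obtain ⟨z, hzW, hz⟩ := h q
    exact ⟨z, hzW, hq hz⟩
  · obtain ⟨p, hp⟩ := exists_walk_of_walk_torso q
    obtain ⟨z, hzW, hz⟩ := h p
    exact ⟨z, hzW, hp z hz (hW hzW)⟩

end Torso

section EfficiencyGraph

variable {V : Type*} {D : V → V → Prop} {A Y : V} {L N : Set V}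

theorem support_moral_subset {Vs : Set V} {a b : V} (w : (moral D Vs).Walk a b) (ha : a ∈ Vs) :
    ∀ x ∈ w.support, x ∈ Vs := by
  induction w with
  | nil => simpa using ha
  | cons hadj w ih =>
    rw [moral, SimpleGraph.fromRel_adj] at hadj
    simp only [SimpleGraph.Walk.support_cons, List.forall_mem_cons]
    exact ⟨ha, ih (hadj.2.elim (fun h => h.2.1) fun h => h.1)⟩

theorem exists_isPath_H0_iff {a b : V} (ha : a ∈ H1verts D A Y L N) :
    (∃ p, IsPath (H0 D A Y L).Adj a b p ∧ ∀ x ∈ p, x ≠ a → x ≠ b → x ∈ Ignore D A Y L N) ↔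
      ∃ w : (H0 D A Y L).Walk a b, ∀ x ∈ w.support, x ∈ H1verts D A Y L N → x = a ∨ x = b := by
  refine exists_isPath_forall_mem_iff.trans (exists_congr fun w => forall₂_congr fun x hx => ?_)
  have hanc : x ∈ ancAYL D A Y L := support_moral_subset w ha.1 x hx
  simp only [H1verts, mem_sdiff, hanc, true_and]
  tauto

theorem H1_adj_iff_torso_adj {a b : V} (ha : a ∉ L) (hb : b ∉ L) :
    (H1 D A Y L N).Adj a b ↔ (torso (H0 D A Y L) (H1verts D A Y L N)).Adj a b := by
  simp only [H1, SimpleGraph.fromRel_adj, ha, hb, and_false, or_false]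
  constructor
  · rintro ⟨hab, ⟨haV, hbV, hpath⟩ | ⟨hbV, haV, hpath⟩⟩
    · exact torso_adj.2 ⟨hab, haV, hbV, (exists_isPath_H0_iff haV).1 hpath⟩
    · exact (torso_adj.2 ⟨hab.symm, hbV, haV, (exists_isPath_H0_iff hbV).1 hpath⟩).symm
  · rintro ⟨hab, haV, hbV, hwalk⟩
    exact ⟨hab, .inl ⟨haV, hbV, (exists_isPath_H0_iff haV).2 hwalk⟩⟩

end EfficiencyGraph

theorem stmt0_general {V : Type*} (D : V → V → Prop) (A Y : V) (L N S T W : Set V)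
    (hS : S ⊆ H1verts D A Y L N) (hT : T ⊆ H1verts D A Y L N)
    (hLW : L ⊆ W) (hW : W ⊆ H1verts D A Y L N) :
    USep (H0 D A Y L) S T W ↔ USep (H1 D A Y L N) S T W :=
  calc USep (H0 D A Y L) S T W
    _ ↔ USep (torso (H0 D A Y L) (H1verts D A Y L N)) S T W := (usep_torso_iff hS hT hW).symm
    _ ↔ USep (H1 D A Y L N) S T W :=
      usep_congr_adj fun _ _ ha hb => (H1_adj_iff_torso_adj (mt (@hLW _) ha) (mt (@hLW _) hb)).symm

/-- Lemma 3 (statement 0): for vertices `u ≠ v` of `H¹` and `L ⊆ W ⊆ V(H¹) \ {u, v}`,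
`u ⊥_{H⁰} v | W` if and only if `u ⊥_{H¹} v | W`. -/
theorem stmt0 {V : Type*} [Fintype V] [DecidableEq V]
    (D : V → V → Prop) (hacy : Acyclic D)
    (A Y : V) (L N : Set V)
    (hAY : A ≠ Y) (hAancY : Relation.ReflTransGen D A Y)
    (hLnd : L ∩ desc D {A} = ∅) (hLY : Y ∉ L)
    (hN : {A, Y} ∪ L ⊆ N)
    (u v : V) (huv : u ≠ v)
    (hu : u ∈ H1verts D A Y L N) (hv : v ∈ H1verts D A Y L N)
    (W : Set V) (hLW : L ⊆ W) (hW : W ⊆ H1verts D A Y L N \ {u, v}) :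
    USep (H0 D A Y L) {u} {v} W ↔ USep (H1 D A Y L N) {u} {v} W := by
  exact stmt0_general D A Y L N {u} {v} W (singleton_subset_iff.2 hu)
    (singleton_subset_iff.2 hv) hLW (hW.trans sdiff_subset)

end CausalGraph
end

section
/- Suppose (L,N) is graphically admissible. Then the vertex set of H^1 equals (an_G({A,Y}∪L) ∩ N) \ (forb(A,Y,G)\{A,Y}), and every A–Y cut Z in H^1 satisfies L ⊆ Z ⊆ V(H^1). -/
open Relation Set

namespace CausalGraph

/-! Every `l ∈ L` is adjacent in `H¹` to both `A` and `Y`, so `A – l – Y` is a path whose only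
interior vertex is `l`, and every cut has to contain `l`. That `l` is a vertex of `H¹` at all comes
from `L` consisting of non-descendants of `A`, whereas forbidden vertices are descendants of `A`. -/

section

variable {V : Type*} {D : V → V → Prop} {A Y l : V} {L N Vs Z : Set V} {H : SimpleGraph V}

lemma subset_anc (D : V → V → Prop) (S : Set V) : S ⊆ anc D S :=
  fun v hv => ⟨v, hv, .refl⟩

lemma forb_subset_desc (D : V → V → Prop) (A Y : V) : forb D A Y ⊆ desc D {A} := by
  rintro v (⟨u, ⟨-, hAu, -⟩, huv⟩ | rfl)
  · exact ⟨A, rfl, hAu.trans huv⟩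
  · exact ⟨v, rfl, .refl⟩

namespace IsCut

lemma ne (hZ : IsCut Vs H A Y Z) : A ≠ Y := by
  rintro rfl
  obtain ⟨-, hdisj, hmeets⟩ := hZ
  have htrivial : IsPath H.Adj A A [A] := ⟨.singleton A, rfl, rfl, List.nodup_singleton A⟩
  obtain ⟨z, hzZ, hzA⟩ := hmeets _ htrivial
  exact (Set.disjoint_iff_inter_eq_empty.2 hdisj).notMem_of_mem_left hzZ
    (.inl (List.mem_singleton.1 hzA))

lemma mem_of_adj_of_adj (hZ : IsCut Vs H A Y Z) (hAl : H.Adj A l) (hlY : H.Adj l Y) : l ∈ Z := by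
  have hAY : A ≠ Y := hZ.ne
  obtain ⟨-, hdisj, hmeets⟩ := hZ
  have hpath : IsPath H.Adj A Y [A, l, Y] :=
    ⟨.cons_cons hAl (.cons_cons hlY (.singleton Y)), rfl, rfl, by simp [hAl.ne, hlY.ne, hAY]⟩
  obtain ⟨z, hzZ, hzp⟩ := hmeets _ hpath
  have hz : z ∉ ({A, Y} : Set V) :=
    (Set.disjoint_iff_inter_eq_empty.2 hdisj).notMem_of_mem_left hzZ
  obtain rfl : z = l := by
    simp only [mem_insert_iff, mem_singleton_iff, not_or] at hz
    simpa [hz.1, hz.2] using hzp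
  exact hzZ

end IsCut

lemma H1verts_eq (hN : {A, Y} ⊆ N) :
    H1verts D A Y L N = (ancAYL D A Y L ∩ N) \ (forb D A Y \ {A, Y}) := by
  ext v
  have hvN : v ∈ ({A, Y} : Set V) → v ∈ N := fun hv => hN hv
  simp only [H1verts, Ignore, mem_sdiff, mem_inter_iff, mem_union, mem_univ, true_and]
  tauto

lemma union_subset_H1verts (hN : {A, Y} ∪ L ⊆ N) (hL : Disjoint L (forb D A Y)) :
    {A, Y} ∪ L ⊆ H1verts D A Y L N := by
  rw [H1verts_eq (subset_union_left.trans hN)]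
  refine fun v hv => ⟨⟨subset_anc D _ hv, hN hv⟩, fun ⟨hvforb, hvAY⟩ => ?_⟩
  exact hL.notMem_of_mem_left (hv.resolve_left hvAY) hvforb

lemma H1_adj_left (hA : A ∈ H1verts D A Y L N) (hl : l ∈ H1verts D A Y L N) (hlL : l ∈ L)
    (hAl : A ≠ l) : (H1 D A Y L N).Adj A l :=
  ⟨hAl, .inl ⟨hA, hl, .inr (.inl ⟨rfl, hlL⟩)⟩⟩

lemma H1_adj_right (hY : Y ∈ H1verts D A Y L N) (hl : l ∈ H1verts D A Y L N) (hlL : l ∈ L)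
    (hlY : l ≠ Y) : (H1 D A Y L N).Adj l Y :=
  ⟨hlY, .inr ⟨hY, hl, .inr (.inr ⟨rfl, hlL⟩)⟩⟩

lemma IsCut.subset_of_H1 (hN : {A, Y} ∪ L ⊆ N) (hL : Disjoint L (forb D A Y)) (hLY : Y ∉ L)
    (hZ : IsCut (H1verts D A Y L N) (H1 D A Y L N) A Y Z) : L ⊆ Z := by
  intro l hl
  have hLA : A ∉ L := hL.notMem_of_mem_right (.inr rfl)
  have hverts : {A, Y} ∪ L ⊆ H1verts D A Y L N := union_subset_H1verts hN hL
  have hAl : (H1 D A Y L N).Adj A l :=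
    H1_adj_left (hverts (by simp)) (hverts (.inr hl)) hl (ne_of_mem_of_not_mem hl hLA).symm
  have hlY : (H1 D A Y L N).Adj l Y :=
    H1_adj_right (hverts (by simp)) (hverts (.inr hl)) hl (ne_of_mem_of_not_mem hl hLY)
  exact hZ.mem_of_adj_of_adj hAl hlY

end

theorem stmt1_general {V : Type*} (D : V → V → Prop) (A Y : V) (L N : Set V)
    (hL : Disjoint L (forb D A Y)) (hLY : Y ∉ L) (hN : {A, Y} ∪ L ⊆ N) :
    H1verts D A Y L N = (ancAYL D A Y L ∩ N) \ (forb D A Y \ {A, Y}) ∧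
    ∀ Z, IsCut (H1verts D A Y L N) (H1 D A Y L N) A Y Z →
      L ⊆ Z ∧ Z ⊆ H1verts D A Y L N :=
  ⟨H1verts_eq (subset_union_left.trans hN), fun _ hZ => ⟨hZ.subset_of_H1 hN hL hLY, hZ.1⟩⟩

/-- Lemma 4 (statement 1): if `(L, N)` is admissible, the vertex set of `H¹` equals
`(an_G({A,Y} ∪ L) ∩ N) \ (forb(A,Y,G) \ {A,Y})`, and every `A`–`Y` cut `Z` in `H¹`
satisfies `L ⊆ Z ⊆ V(H¹)`. -/
theorem stmt1 {V : Type*} [Fintype V] [DecidableEq V]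
    (D : V → V → Prop) (hacy : Acyclic D)
    (A Y : V) (L N : Set V)
    (hAY : A ≠ Y) (hAancY : Relation.ReflTransGen D A Y)
    (hLnd : L ∩ desc D {A} = ∅) (hLY : Y ∉ L)
    (hN : {A, Y} ∪ L ⊆ N)
    (hadm : Admissible D A Y L N) :
    H1verts D A Y L N = (ancAYL D A Y L ∩ N) \ (forb D A Y \ {A, Y}) ∧
    ∀ Z, IsCut (H1verts D A Y L N) (H1 D A Y L N) A Y Z →
      L ⊆ Z ∧ Z ⊆ H1verts D A Y L N := by
  have hL : Disjoint L (desc D {A}) := Set.disjoint_iff_inter_eq_empty.2 hLnd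
  exact stmt1_general D A Y L N (hL.mono_right (forb_subset_desc D A Y)) hLY hN

end CausalGraph
end
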